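/- Let M be a category with all small limits and let B be a restricted cosimplicial object in M (a functor Δ_res → M, where Δ_res is the subcategory of Δ with only strictly monotone maps). Then the limit of B over Δ_res is naturally isomorphic to the equalizer of the two coface maps d^0, d^1 : B^0 → B^1. -/

import Mathlib

/-!
STATEMENT 1: For a category M with all small limits and a restricted
cosimplicial object B in M (a functor Δ_res → M, where Δ_res ⊆ Δ has only the
strictly monotone, i.e. injective order-preserving / mono, maps), the limit of
B over Δ_res is naturally isomorphic to the equalizer of the two coface maps
d⁰, d¹ : B⁰ → B¹.
-/

open CategoryTheory CategoryTheory.Limits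

/-- The restricted simplex category `Δ_res`: the wide subcategory of the
simplex category whose morphisms are the monomorphisms (equivalently the
strictly monotone maps). -/
def DeltaRes : Type :=
  WideSubcategory (MorphismProperty.monomorphisms SimplexCategory)

instance : Category DeltaRes :=
  inferInstanceAs
    (Category (WideSubcategory (MorphismProperty.monomorphisms SimplexCategory)))

/-- The object `[n]` of `Δ_res`. -/
def DeltaRes.mk (n : ℕ) : DeltaRes :=
  WideSubcategory.mk (SimplexCategory.mk n)

/-- The coface map `δ i` as a morphism of `Δ_res`. -/
def DeltaRes.δ {n : ℕ} (i : Fin (n + 2)) : DeltaRes.mk n ⟶ DeltaRes.mk (n + 1) :=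
  ⟨SimplexCategory.δ i, inferInstanceAs (Mono (SimplexCategory.δ i))⟩

/-!
The parallel pair `d⁰, d¹ : [0] ⇉ [1]` is an initial functor into `Δ_res`, so restricting a diagram
along it does not change the limit. For initiality, a map `[0] ⟶ [n]` is a vertex of `[n]`, and two
distinct vertices are the endpoints of an edge `[1] ⟶ [n]`; the edge is injective, hence a morphism
of `Δ_res`, precisely because the vertices are distinct.
-/

section ParallelPair

variable {C : Type*} [Category C] {X Y : C}

theorem zigzag_costructuredArrow_parallelPair (f g : X ⟶ Y) {Z : C} (a : Y ⟶ Z) :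
    Zigzag (J := CostructuredArrow (parallelPair f g) Z)
      (.mk (Y := WalkingParallelPair.zero) (f ≫ a))
      (.mk (Y := WalkingParallelPair.zero) (g ≫ a)) :=
  let edge : CostructuredArrow (parallelPair f g) Z := .mk (Y := WalkingParallelPair.one) a
  Zigzag.of_hom_inv (j₂ := edge)
    (CostructuredArrow.homMk (f' := edge) WalkingParallelPairHom.left)
    (CostructuredArrow.homMk (f' := edge) WalkingParallelPairHom.right)

theorem initial_parallelPair_of_ne_imp_exists_factor {f g : X ⟶ Y}
    (nonempty_hom : ∀ Z, Nonempty (X ⟶ Z))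
    (exists_factor : ∀ ⦃Z : C⦄ (i j : X ⟶ Z), i ≠ j →
      ∃ a : Y ⟶ Z, (f ≫ a = i ∧ g ≫ a = j) ∨ (f ≫ a = j ∧ g ≫ a = i)) :
    (parallelPair f g).Initial := by
  refine parallelPair_initial_mk' f g nonempty_hom fun Z i j ↦ ?_
  rcases eq_or_ne i j with rfl | hij
  · exact Zigzag.refl _
  · obtain ⟨a, ⟨rfl, rfl⟩ | ⟨rfl, rfl⟩⟩ := exists_factor i j hij
    · exact zigzag_costructuredArrow_parallelPair f g a
    · exact (zigzag_costructuredArrow_parallelPair f g a).symm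

variable {M : Type*} [Category M] (f g : X ⟶ Y)

theorem equalizer_ι_app_condition {B B' : C ⥤ M} [HasEqualizer (B.map f) (B.map g)]
    (η : B ⟶ B') :
    (equalizer.ι (B.map f) (B.map g) ≫ η.app X) ≫ B'.map f =
      (equalizer.ι (B.map f) (B.map g) ≫ η.app X) ≫ B'.map g := by
  rw [Category.assoc, Category.assoc, ← η.naturality, ← η.naturality, equalizer.condition_assoc]

variable [(parallelPair f g).Initial]

/-- The limit of a diagram `B` as the equalizer of `B.map f` and `B.map g`, for a parallel pair
`f, g` that is initial in the indexing category. -/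
noncomputable def limitIsoEqualizer (B : C ⥤ M) [HasLimit B]
    [HasEqualizer (B.map f) (B.map g)] : limit B ≅ equalizer (B.map f) (B.map g) :=
  (Functor.Initial.limitIso (parallelPair f g) B).symm ≪≫
    HasLimit.isoOfNatIso (parallelPairIsoMk (.refl (B.obj X)) (.refl (B.obj Y)))

theorem limitIsoEqualizer_hom_ι (B : C ⥤ M) [HasLimit B] [HasEqualizer (B.map f) (B.map g)] :
    (limitIsoEqualizer f g B).hom ≫ equalizer.ι (B.map f) (B.map g) = limit.π B X := by
  simp [limitIsoEqualizer, equalizer.ι, Functor.Initial.limitIso_inv]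

theorem limitIsoEqualizer_hom_naturality {B B' : C ⥤ M} [HasLimit B] [HasLimit B']
    [HasEqualizer (B.map f) (B.map g)] [HasEqualizer (B'.map f) (B'.map g)] (η : B ⟶ B') :
    limMap η ≫ (limitIsoEqualizer f g B').hom =
      (limitIsoEqualizer f g B).hom ≫
        equalizer.lift (equalizer.ι (B.map f) (B.map g) ≫ η.app X)
          (equalizer_ι_app_condition f g η) := by
  apply equalizer.hom_ext
  rw [Category.assoc, limitIsoEqualizer_hom_ι, limMap_π, Category.assoc, equalizer.lift_ι,
    ← Category.assoc, limitIsoEqualizer_hom_ι]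

end ParallelPair

theorem mono_mkOfLe_of_lt {n : ℕ} {i j : Fin (n + 1)} (h : i < j) :
    Mono (SimplexCategory.mkOfLe i j h.le) := by
  rw [SimplexCategory.mono_iff_injective]
  have strictMono : StrictMono (SimplexCategory.mkOfLe i j h.le).toOrderHom :=
    Fin.strictMono_iff_lt_succ.mpr fun k ↦ by rwa [Subsingleton.elim k 0]
  exact strictMono.injective

namespace DeltaRes

variable {X : DeltaRes}

instance nonempty_zero_hom : Nonempty (mk 0 ⟶ X) :=
  ⟨⟨SimplexCategory.const _ _ 0, SimplexCategory.isTerminalZero.mono_from _⟩⟩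

/-- The vertex of `X = [n]`, an element of `{0, …, n}`, picked out by a morphism `[0] ⟶ X`. -/
def vertex (f : mk 0 ⟶ X) : Fin ((WideSubcategory.obj X).len + 1) :=
  f.hom.toOrderHom (0 : Fin 1)

theorem vertex_injective : Function.Injective (vertex (X := X)) := fun _ _ h ↦
  WideSubcategory.hom_ext _ (SimplexCategory.Hom.ext_zero_left _ _ h)

theorem exists_edge_of_vertex_lt {f g : mk 0 ⟶ X} (h : vertex f < vertex g) :
    ∃ e : mk 1 ⟶ X, δ (0 : Fin 2) ≫ e = g ∧ δ (1 : Fin 2) ≫ e = f :=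
  ⟨⟨SimplexCategory.mkOfLe _ _ h.le, mono_mkOfLe_of_lt h⟩,
    vertex_injective rfl, vertex_injective rfl⟩

instance initial_parallelPair_δ : (parallelPair (δ (0 : Fin 2)) (δ (1 : Fin 2))).Initial := by
  refine initial_parallelPair_of_ne_imp_exists_factor (fun _ ↦ inferInstance) fun X i j hij ↦ ?_
  rcases (vertex_injective.ne hij).lt_or_gt with hlt | hgt
  · obtain ⟨e, he⟩ := exists_edge_of_vertex_lt hlt
    exact ⟨e, .inr he⟩
  · obtain ⟨e, he⟩ := exists_edge_of_vertex_lt hgt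
    exact ⟨e, .inl he⟩

theorem hasLimitsOfShape (M : Type*) [Category M] [HasEqualizers M] :
    HasLimitsOfShape DeltaRes M :=
  Functor.Initial.hasLimitsOfShape_of_initial (parallelPair (δ (0 : Fin 2)) (δ (1 : Fin 2)))

end DeltaRes

attribute [local instance] DeltaRes.hasLimitsOfShape in
theorem statement1_general {M : Type*} [Category M] [HasEqualizers M] :
    ∃ e : ∀ B : DeltaRes ⥤ M,
        limit B ≅ equalizer (B.map (DeltaRes.δ (0 : Fin 2))) (B.map (DeltaRes.δ (1 : Fin 2))),
      ∀ {B B' : DeltaRes ⥤ M} (η : B ⟶ B'),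
        limMap η ≫ (e B').hom =
          (e B).hom ≫
            equalizer.lift
              (equalizer.ι (B.map (DeltaRes.δ (0 : Fin 2))) (B.map (DeltaRes.δ (1 : Fin 2))) ≫
                η.app (DeltaRes.mk 0))
              (equalizer_ι_app_condition _ _ η) :=
  ⟨fun B ↦ limitIsoEqualizer _ _ B, fun η ↦ limitIsoEqualizer_hom_naturality _ _ η⟩

theorem statement1 {M : Type*} [Category M] [HasLimits M] :
    ∃ e : ∀ B : DeltaRes ⥤ M,
        limit B ≅ equalizer (B.map (DeltaRes.δ (0 : Fin 2))) (B.map (DeltaRes.δ (1 : Fin 2))),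
      -- naturality of the isomorphism in `B`
      ∀ {B B' : DeltaRes ⥤ M} (η : B ⟶ B'),
        limMap η ≫ (e B').hom =
          (e B).hom ≫
            equalizer.lift
              (equalizer.ι (B.map (DeltaRes.δ (0 : Fin 2))) (B.map (DeltaRes.δ (1 : Fin 2))) ≫
                η.app (DeltaRes.mk 0))
              (by
                simp only [Category.assoc, ← η.naturality]
                simp only [← Category.assoc]
                rw [equalizer.condition]) :=
  statement1_general
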